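/- (Theorem: feasibility error of DUCA) Suppose the problem setup holds, each X_i is additionally compact, and the sequences (x^k)_{k≥1}, (y^k)_{k≥0}, (z^k)_{k≥0} are generated by DUCA. Then for every k ≥ 1, the Euclidean norm of the vector ( [Σ_{i=1}^N g_i(x̄_i^k)]_+ , Σ_{i=1}^N h_i(x̄_i^k) ) ∈ ℝ^{m+p} is at most (√(N·λ_1(P_A))/k)·(‖y^0 − y*‖_A + ‖s^0 − s*‖_G), where [w]_+ denotes the componentwise maximum of w with 0. -/

import Mathlib

open Matrix
open scoped Kronecker

abbrev Blk (m p : ℕ) := Sum (Fin m) (Fin p)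
abbrev Idx (N m p : ℕ) := Fin N × Blk m p

def projK {N m p : ℕ} (y : Idx N m p → ℝ) : Idx N m p → ℝ :=
  fun ij =>
    match ij with
    | (i, Sum.inl j) => max (y (i, Sum.inl j)) 0
    | (i, Sum.inr j) => y (i, Sum.inr j)

def projKpolar {N m p : ℕ} (y : Idx N m p → ℝ) : Idx N m p → ℝ :=
  fun ij =>
    match ij with
    | (i, Sum.inl j) => min (y (i, Sum.inl j)) 0
    | (_, Sum.inr _) => 0

def memK {N m p : ℕ} (y : Idx N m p → ℝ) : Prop :=
  ∀ (i : Fin N) (j : Fin m), 0 ≤ y (i, Sum.inl j)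

def IsMPInv {n : Type*} [Fintype n] [DecidableEq n] (M Md : Matrix n n ℝ) : Prop :=
  M * Md * M = M ∧ Md * M * Md = Md ∧ (M * Md)ᵀ = M * Md ∧ (Md * M)ᵀ = Md * M

def quadForm {n : Type*} [Fintype n] (M : Matrix n n ℝ) (w : n → ℝ) : ℝ :=
  w ⬝ᵥ (M *ᵥ w)

/-!
Summing the dual update over the agents annihilates every term in the range of `H` and of
`H̃^{1/2}`, so the accumulated constraint values telescope to the agent sum of `A (yᵏ - y⁰)`, up to
residuals with a favourable sign. By Jensen's inequality, `k` times the violation at the running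
average is at most the norm of that sum, hence at most `√(N λ₁(P_A)) ‖yᵏ - y⁰‖_A` by the
Cauchy-Schwarz inequality for `A`. It remains to bound `‖yᵏ - y⁰‖_A` independently of `k`. The
first-order condition of the penalized primal step says that `xᵏ⁺¹` minimizes the Lagrangian with
multiplier `yᵏ⁺¹`; added to the saddle point inequality, this makes `‖sᵏ - s*‖_G` nonincreasing.
-/

section QuadraticForms

variable {n : Type*} [Fintype n] {A H M : Matrix n n ℝ}

lemma dotProduct_mulVec_of_isHermitian (hM : M.IsHermitian) (u v : n → ℝ) :
    u ⬝ᵥ (M *ᵥ v) = (M *ᵥ u) ⬝ᵥ v := by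
  rw [dotProduct_mulVec, ← mulVec_transpose, ← conjTranspose_eq_transpose_of_trivial, hM.eq]

lemma quadForm_nonneg (hM : M.PosSemidef) (u : n → ℝ) : 0 ≤ quadForm M u :=
  hM.dotProduct_mulVec_nonneg u

lemma quadForm_sub (hM : M.IsHermitian) (u v : n → ℝ) :
    quadForm M (u - v) = quadForm M u - 2 * (u ⬝ᵥ (M *ᵥ v)) + quadForm M v := by
  have hvu : v ⬝ᵥ (M *ᵥ u) = u ⬝ᵥ (M *ᵥ v) := by
    rw [dotProduct_mulVec_of_isHermitian hM, dotProduct_comm]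
  simp only [quadForm, mulVec_sub, dotProduct_sub, sub_dotProduct, hvu]
  ring

lemma quadForm_diagonal [DecidableEq n] (c u : n → ℝ) :
    quadForm (diagonal c) u = ∑ i, c i * u i ^ 2 := by
  simp only [quadForm, dotProduct, mulVec_diagonal]
  exact Finset.sum_congr rfl fun i _ => by ring

lemma sq_dotProduct_mulVec_le (hM : M.PosSemidef) (u v : n → ℝ) :
    (u ⬝ᵥ (M *ᵥ v)) ^ 2 ≤ quadForm M u * quadForm M v := by
  let _ := M.toSeminormedAddCommGroup hM
  let _ := M.toInnerProductSpace hM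
  have hinner (a b : n → ℝ) : inner ℝ a b = a ⬝ᵥ (M *ᵥ b) := dotProduct_comm _ _
  have h := real_inner_mul_inner_self_le u v
  simp only [hinner] at h
  rwa [← sq] at h

lemma sqrt_quadForm_sub_le (hM : M.PosSemidef) (u v : n → ℝ) :
    √(quadForm M (u - v)) ≤ √(quadForm M u) + √(quadForm M v) := by
  have hu := quadForm_nonneg hM u
  have hcs : |u ⬝ᵥ (M *ᵥ v)| ≤ √(quadForm M u) * √(quadForm M v) :=
    Real.sqrt_mul hu _ ▸ Real.abs_le_sqrt (sq_dotProduct_mulVec_le hM u v)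
  refine Real.sqrt_le_iff.2 ⟨by positivity, ?_⟩
  rw [quadForm_sub hM.1, add_sq, Real.sq_sqrt hu, Real.sq_sqrt (quadForm_nonneg hM v)]
  linarith [(abs_le.1 hcs).1]

lemma posSemidef_smul_one_sub [DecidableEq n] (hM : M.IsHermitian) {lam : ℝ}
    (hlam : ∀ (μ : ℝ) (v : n → ℝ), v ≠ 0 → M *ᵥ v = μ • v → μ ≤ lam) :
    (lam • (1 : Matrix n n ℝ) - M).PosSemidef := by
  have hH : (lam • (1 : Matrix n n ℝ) - M).IsHermitian :=
    (isHermitian_one.smul (IsSelfAdjoint.all lam)).sub hM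
  refine hH.posSemidef_iff_eigenvalues_nonneg.2 fun i => ?_
  set v : n → ℝ := (hH.eigenvectorBasis i).ofLp
  have hv : v ≠ 0 := fun h0 =>
    hH.eigenvectorBasis.orthonormal.ne_zero i (WithLp.ofLp_injective 2 h0)
  have hMv : M *ᵥ v = (lam - hH.eigenvalues i) • v := by
    rw [sub_smul, ← hH.mulVec_eigenvectorBasis i, sub_mulVec, smul_mulVec, one_mulVec,
      sub_sub_cancel]
  simpa only [Pi.zero_apply, sub_le_self_iff] using hlam _ v hv hMv

lemma isDiag_inv [DecidableEq n] (hM : M.IsDiag) : M⁻¹.IsDiag := by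
  rw [← hM.diagonal_diag, inv_diagonal]
  exact isDiag_diagonal _

lemma exists_inv_eq_diagonal [DecidableEq n] (hM : M.IsDiag) (hpos : M.PosDef) :
    ∃ c : n → ℝ, 0 ≤ c ∧ M⁻¹ = diagonal c :=
  ⟨M⁻¹.diag, fun _ => hpos.inv.posSemidef.diag_nonneg, (isDiag_inv hM).diagonal_diag.symm⟩

/-- The squared seminorm `‖(y, z)‖_G² = ‖y‖_A² + ‖z‖² / ρ` in which the primal-dual iterates are
Fejér monotone. -/
noncomputable def gForm (A : Matrix n n ℝ) (ρ : ℝ) (y z : n → ℝ) : ℝ :=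
  quadForm A y + (z ⬝ᵥ z) / ρ

lemma quadForm_le_gForm {ρ : ℝ} (hρ : 0 < ρ) (y z : n → ℝ) : quadForm A y ≤ gForm A ρ y z :=
  le_add_of_nonneg_right (div_nonneg (dotProduct_self_star_nonneg z) hρ.le)

lemma gForm_step_le (hA : A.PosSemidef) (hM : M.IsHermitian)
    (hHM : (H - M * M).PosSemidef) {ρ : ℝ} (hρ : 0 < ρ) {y y' z z' : n → ℝ}
    (hz : z' = z + ρ • (M *ᵥ y'))
    (hy : y' ⬝ᵥ (A *ᵥ (y' - y) + ρ • (H *ᵥ y') + M *ᵥ z) ≤ 0) :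
    gForm A ρ y' z' ≤ gForm A ρ y z := by
  have hdiff : 0 ≤ quadForm A y' - 2 * (y' ⬝ᵥ (A *ᵥ y)) + quadForm A y :=
    quadForm_sub hA.1 y' y ▸ quadForm_nonneg hA (y' - y)
  have hHM' : ρ * ((M *ᵥ y') ⬝ᵥ (M *ᵥ y')) ≤ ρ * quadForm H y' := by
    refine mul_le_mul_of_nonneg_left ?_ hρ.le
    have h := quadForm_nonneg hHM y'
    rwa [quadForm, sub_mulVec, dotProduct_sub, ← mulVec_mulVec,
      dotProduct_mulVec_of_isHermitian hM, sub_nonneg] at h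
  have hnonneg : 0 ≤ ρ * ((M *ᵥ y') ⬝ᵥ (M *ᵥ y')) :=
    mul_nonneg hρ.le (dotProduct_self_star_nonneg _)
  have hzz : (z' ⬝ᵥ z') / ρ
      = (z ⬝ᵥ z) / ρ + 2 * (y' ⬝ᵥ (M *ᵥ z)) + ρ * ((M *ᵥ y') ⬝ᵥ (M *ᵥ y')) := by
    rw [hz, dotProduct_mulVec_of_isHermitian hM]
    simp only [dotProduct_add, add_dotProduct, dotProduct_smul, smul_dotProduct, smul_eq_mul,
      dotProduct_comm z]
    field_simp
    ring
  simp only [dotProduct_add, mulVec_sub, dotProduct_sub, dotProduct_smul, smul_eq_mul] at hy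
  simp only [gForm, hzz]
  simp only [quadForm] at hdiff hHM' ⊢
  linarith

end QuadraticForms

section Consensus

variable {ι κ : Type*}

/-- The vector `1 ⊗ b`, in which every agent `i : ι` holds the same block `b`. -/
def consensus (b : κ → ℝ) : ι × κ → ℝ := fun ij => b ij.2

lemma kronecker_one_mulVec_apply [Fintype ι] [Fintype κ] [DecidableEq κ] (P : Matrix ι ι ℝ)
    (u : ι × κ → ℝ) (i : ι) (j : κ) :
    ((P ⊗ₖ (1 : Matrix κ κ ℝ)) *ᵥ u) (i, j) = (P *ᵥ fun i' => u (i', j)) i := by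
  simp only [mulVec, dotProduct, kronecker_apply, Fintype.sum_prod_type, one_apply, mul_ite,
    mul_one, mul_zero, ite_mul, zero_mul, Finset.sum_ite_eq, Finset.mem_univ, if_true]

lemma kronecker_one_mulVec_eq_zero_iff [Fintype ι] [Fintype κ] [DecidableEq κ]
    {P : Matrix ι ι ℝ} (hP : ∀ v : ι → ℝ, P *ᵥ v = 0 ↔ ∃ t : ℝ, v = fun _ => t)
    (u : ι × κ → ℝ) :
    (P ⊗ₖ (1 : Matrix κ κ ℝ)) *ᵥ u = 0 ↔ u ∈ Set.range consensus := by
  have hblocks : (P ⊗ₖ (1 : Matrix κ κ ℝ)) *ᵥ u = 0 ↔ ∀ j, P *ᵥ (fun i => u (i, j)) = 0 := by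
    simp only [funext_iff, Prod.forall, kronecker_one_mulVec_apply, Pi.zero_apply]
    exact forall_comm
  simp only [hblocks, hP]
  constructor
  · intro h
    choose b hb using h
    exact ⟨b, funext fun ij => (congrFun (hb ij.2) ij.1).symm⟩
  · rintro ⟨b, rfl⟩ j
    exact ⟨b j, rfl⟩

variable [Fintype ι]

/-- The sum over all agents of the blocks of a stacked vector. -/
def agentSum : (ι × κ → ℝ) →ₗ[ℝ] (κ → ℝ) where
  toFun u j := ∑ i, u (i, j)
  map_add' _ _ := funext fun _ => Finset.sum_add_distrib
  map_smul' _ _ := funext fun _ => (Finset.mul_sum ..).symm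

lemma agentSum_apply (u : ι × κ → ℝ) (j : κ) : agentSum u j = ∑ i, u (i, j) := rfl

lemma agentSum_consensus (b : κ → ℝ) :
    agentSum (consensus b : ι × κ → ℝ) = (Fintype.card ι : ℝ) • b := by
  ext j
  simp only [agentSum_apply, consensus, Finset.sum_const, Finset.card_univ, nsmul_eq_mul,
    Pi.smul_apply, smul_eq_mul]

variable [Fintype κ]

lemma consensus_dotProduct (b : κ → ℝ) (u : ι × κ → ℝ) :
    consensus b ⬝ᵥ u = b ⬝ᵥ agentSum u := by
  simp only [dotProduct, consensus, agentSum_apply, Finset.mul_sum, Fintype.sum_prod_type_right]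

lemma agentSum_mulVec_eq_zero {M : Matrix (ι × κ) (ι × κ) ℝ} (hM : M.IsHermitian)
    (hker : ∀ b, M *ᵥ consensus b = 0) (u : ι × κ → ℝ) : agentSum (M *ᵥ u) = 0 := by
  rw [← dotProduct_self_eq_zero, ← consensus_dotProduct, dotProduct_mulVec_of_isHermitian hM,
    hker, zero_dotProduct]

lemma sqrt_agentSum_mulVec_le [DecidableEq ι] [DecidableEq κ] {A : Matrix (ι × κ) (ι × κ) ℝ}
    (hA : A.PosSemidef) {lam : ℝ} (hlam : (lam • (1 : Matrix (ι × κ) (ι × κ) ℝ) - A).PosSemidef)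
    (u : ι × κ → ℝ) :
    √(agentSum (A *ᵥ u) ⬝ᵥ agentSum (A *ᵥ u)) ≤ √(Fintype.card ι * lam) * √(quadForm A u) := by
  set b := agentSum (A *ᵥ u) with hb
  have hQb : quadForm A (consensus b) ≤ (b ⬝ᵥ b) * (Fintype.card ι * lam) := by
    have h := quadForm_nonneg hlam (consensus b)
    rw [quadForm, sub_mulVec, dotProduct_sub, smul_mulVec, one_mulVec, dotProduct_smul,
      consensus_dotProduct, agentSum_consensus, dotProduct_smul, smul_eq_mul, smul_eq_mul,
      sub_nonneg] at h
    rw [quadForm]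
    linarith
  have hsq : (b ⬝ᵥ b) * (b ⬝ᵥ b) ≤ (b ⬝ᵥ b) * (Fintype.card ι * lam * quadForm A u) := by
    calc (b ⬝ᵥ b) * (b ⬝ᵥ b) = (consensus b ⬝ᵥ (A *ᵥ u)) ^ 2 := by
          rw [consensus_dotProduct, ← hb, sq]
      _ ≤ quadForm A (consensus b) * quadForm A u := sq_dotProduct_mulVec_le hA _ _
      _ ≤ (b ⬝ᵥ b) * (Fintype.card ι * lam) * quadForm A u :=
          mul_le_mul_of_nonneg_right hQb (quadForm_nonneg hA u)
      _ = _ := mul_assoc _ _ _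
  rw [← Real.sqrt_mul' _ (quadForm_nonneg hA u)]
  rcases (show 0 ≤ b ⬝ᵥ b from dotProduct_self_star_nonneg b).eq_or_lt with h0 | hpos
  · rw [← h0, Real.sqrt_zero]
    exact Real.sqrt_nonneg _
  · exact Real.sqrt_le_sqrt (le_of_mul_le_mul_left hsq hpos)

end Consensus

section Cone

variable {N m p : ℕ} {u v : Idx N m p → ℝ}

/-- Membership in the polar cone `K°`, the counterpart of `memK`. -/
def memKpolar (u : Idx N m p → ℝ) : Prop :=
  ∀ i, (∀ j, u (i, Sum.inl j) ≤ 0) ∧ ∀ j, u (i, Sum.inr j) = 0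

lemma memK_projK (a : Idx N m p → ℝ) : memK (projK a) := fun _ _ => le_max_right _ _

lemma memKpolar_projKpolar (a : Idx N m p → ℝ) : memKpolar (projKpolar a) :=
  fun _ => ⟨fun _ => min_le_right _ _, fun _ => rfl⟩

lemma memKpolar.add (hu : memKpolar u) (hv : memKpolar v) : memKpolar (u + v) :=
  fun i => ⟨fun j => add_nonpos ((hu i).1 j) ((hv i).1 j), fun j =>
    (congrArg₂ (· + ·) ((hu i).2 j) ((hv i).2 j)).trans (add_zero 0)⟩

lemma memKpolar.sum {α : Type*} {s : Finset α} {w : α → Idx N m p → ℝ}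
    (hw : ∀ l, memKpolar (w l)) : memKpolar (∑ l ∈ s, w l) := by
  refine fun i => ⟨fun j => ?_, fun j => ?_⟩ <;> rw [Finset.sum_apply]
  · exact Finset.sum_nonpos fun l _ => (hw l i).1 j
  · exact Finset.sum_eq_zero fun l _ => (hw l i).2 j

lemma memKpolar_agentSum (hu : memKpolar u) :
    (∀ j, agentSum u (Sum.inl j) ≤ 0) ∧ ∀ j, agentSum u (Sum.inr j) = 0 :=
  ⟨fun j => (agentSum_apply u _).trans_le (Finset.sum_nonpos fun i _ => (hu i).1 j),
    fun j => (agentSum_apply u _).trans (Finset.sum_eq_zero fun i _ => (hu i).2 j)⟩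

lemma projK_add_projKpolar (a : Idx N m p → ℝ) : projK a + projKpolar a = a := by
  ext ⟨i, j | j⟩
  · exact (max_add_min _ _).trans (add_zero _)
  · exact add_zero _

lemma dotProduct_nonpos_of_memK (hu : memK u) (hv : memKpolar v) : u ⬝ᵥ v ≤ 0 := by
  refine Finset.sum_nonpos ?_
  rintro ⟨i, j | j⟩ -
  · exact mul_nonpos_of_nonneg_of_nonpos (hu i j) ((hv i).1 j)
  · rw [(hv i).2 j, mul_zero]

variable {c : Idx N m p → ℝ}

lemma projK_diagonal_mulVec (hc : 0 ≤ c) (u : Idx N m p → ℝ) :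
    projK (diagonal c *ᵥ u) = diagonal c *ᵥ projK u := by
  ext ⟨i, j | j⟩
  · simp only [projK, mulVec_diagonal, mul_max_of_nonneg _ _ (hc _), mul_zero]
  · simp only [projK, mulVec_diagonal]

lemma diagonal_mulVec_projK_dotProduct_projKpolar (c a : Idx N m p → ℝ) :
    (diagonal c *ᵥ projK a) ⬝ᵥ projKpolar a = 0 := by
  refine Finset.sum_eq_zero ?_
  rintro ⟨i, j | j⟩ -
  · simp only [mulVec_diagonal, projK, projKpolar, mul_assoc, max_mul_min, mul_zero]
  · exact mul_zero _

/-- The penalty `½ ‖𝒫_K v‖²_C` that replaces the constraint functions in the primal update. -/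
noncomputable def conePenalty (C : Matrix (Idx N m p) (Idx N m p) ℝ) (v : Idx N m p → ℝ) : ℝ :=
  1 / 2 * quadForm C (projK v)

lemma conePenalty_diagonal (c v : Idx N m p → ℝ) :
    conePenalty (diagonal c) v = ∑ ij, 1 / 2 * (c ij * projK v ij ^ 2) := by
  rw [conePenalty, quadForm_diagonal, Finset.mul_sum]

lemma conePenalty_mono (hc : 0 ≤ c) (huv : memKpolar (v - u)) :
    conePenalty (diagonal c) v ≤ conePenalty (diagonal c) u := by
  simp only [conePenalty_diagonal]
  refine Finset.sum_le_sum ?_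
  rintro ⟨i, j | j⟩ -
  · have hle : v (i, Sum.inl j) ≤ u (i, Sum.inl j) := sub_nonpos.1 ((huv i).1 j)
    have hcij := hc (i, Sum.inl j)
    simp only [projK]
    gcongr
  · simp only [projK, sub_eq_zero.1 ((huv i).2 j), le_refl]

lemma projK_add_sq_le (u δ : Idx N m p → ℝ) (ij : Idx N m p) :
    projK (u + δ) ij ^ 2 ≤ (projK u ij + δ ij) ^ 2 := by
  obtain ⟨i, j | j⟩ := ij
  · simp only [projK, Pi.add_apply]
    rcases le_total (u (i, Sum.inl j) + δ (i, Sum.inl j)) 0 with h | h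
    · rw [max_eq_right h, zero_pow two_ne_zero]
      exact sq_nonneg _
    · rw [max_eq_left h]
      gcongr
      exact le_max_left _ _
  · exact le_rfl

lemma conePenalty_add_le (hc : 0 ≤ c) (u δ : Idx N m p → ℝ) :
    conePenalty (diagonal c) (u + δ) ≤ conePenalty (diagonal c) u
      + (diagonal c *ᵥ projK u) ⬝ᵥ δ + 1 / 2 * quadForm (diagonal c) δ := by
  simp only [conePenalty_diagonal, quadForm_diagonal, dotProduct, mulVec_diagonal, Finset.mul_sum,
    ← Finset.sum_add_distrib]
  refine Finset.sum_le_sum fun ij _ => ?_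
  linarith [mul_le_mul_of_nonneg_left (projK_add_sq_le u δ ij) (hc ij)]

end Cone

section FirstOrder

variable {E : Type*} [AddCommGroup E] [Module ℝ E] {N m p : ℕ}

/-- A stacked constraint map that is convex with respect to the dual cone `-K°` of `K`: its
`μ`-coordinates are convex, and its `λ`-coordinates are both convex and concave, i.e. affine. -/
structure IsConeConvexOn (S : Set E) (G : E → Idx N m p → ℝ) : Prop where
  convexOn : ∀ ij, ConvexOn ℝ S fun w => G w ij
  concaveOn_inr : ∀ i j, ConcaveOn ℝ S fun w => G w (i, Sum.inr j)

variable {S : Set E} {F : E → ℝ} {G : E → Idx N m p → ℝ} {c : Idx N m p → ℝ}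

lemma IsConeConvexOn.memKpolar_segment_sub (hG : IsConeConvexOn S G) {w₀ w : E} (h₀ : w₀ ∈ S)
    (hw : w ∈ S) {t : ℝ} (ht : 0 ≤ t) (ht1 : t ≤ 1) :
    memKpolar (G ((1 - t) • w₀ + t • w) - (G w₀ + t • (G w - G w₀))) := by
  have hconvex := fun ij => (hG.convexOn ij).2 h₀ hw (sub_nonneg.2 ht1) ht (sub_add_cancel 1 t)
  have hconcave := fun i j =>
    (hG.concaveOn_inr i j).2 h₀ hw (sub_nonneg.2 ht1) ht (sub_add_cancel 1 t)
  simp only [smul_eq_mul] at hconvex hconcave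
  refine fun i => ⟨fun j => ?_, fun j => le_antisymm ?_ ?_⟩ <;>
    simp only [Pi.sub_apply, Pi.add_apply, Pi.smul_apply, smul_eq_mul]
  · linarith [hconvex (i, Sum.inl j)]
  · linarith [hconvex (i, Sum.inr j)]
  · linarith [hconcave i j]

lemma nonneg_of_forall_add_mul_nonneg {a C : ℝ} (h : ∀ t : ℝ, 0 < t → t ≤ 1 → 0 ≤ a + t * C) :
    0 ≤ a := by
  have hlim : Filter.Tendsto (fun t : ℝ => a + t * C) (nhdsWithin 0 (Set.Ioi 0)) (nhds a) := by
    refine tendsto_nhdsWithin_of_tendsto_nhds (Continuous.tendsto' (by fun_prop) _ _ ?_)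
    rw [zero_mul, add_zero]
  refine ge_of_tendsto hlim ?_
  filter_upwards [Ioc_mem_nhdsGT one_pos] with t ht using h t ht.1 ht.2

lemma isMinOn_add_dotProduct_of_conePenalty (hF : ConvexOn ℝ S F) (hG : IsConeConvexOn S G)
    (hc : 0 ≤ c) {q : Idx N m p → ℝ} {w₀ : E} (h₀ : w₀ ∈ S)
    (hmin : IsMinOn (fun w => F w + conePenalty (diagonal c) (q + G w)) S w₀) :
    IsMinOn (fun w => F w + (diagonal c *ᵥ projK (q + G w₀)) ⬝ᵥ G w) S w₀ := by
  intro w hw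
  set δ := G w - G w₀ with hδ
  set slope := F w - F w₀ + (diagonal c *ᵥ projK (q + G w₀)) ⬝ᵥ δ with hslope
  have hdescent (t : ℝ) (ht : 0 < t) (ht1 : t ≤ 1) :
      0 ≤ slope + t * (1 / 2 * quadForm (diagonal c) δ) := by
    have hFt : F ((1 - t) • w₀ + t • w) ≤ (1 - t) * F w₀ + t * F w :=
      hF.2 h₀ hw (sub_nonneg.2 ht1) ht.le (sub_add_cancel 1 t)
    have hmem : (1 - t) • w₀ + t • w ∈ S :=
      hF.1 h₀ hw (sub_nonneg.2 ht1) ht.le (sub_add_cancel 1 t)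
    have hmono : conePenalty (diagonal c) (q + G ((1 - t) • w₀ + t • w))
        ≤ conePenalty (diagonal c) (q + G w₀ + t • δ) := by
      refine conePenalty_mono hc ?_
      rw [add_assoc, add_sub_add_left_eq_sub]
      exact hG.memKpolar_segment_sub h₀ hw ht.le ht1
    have hexpand := conePenalty_add_le hc (q + G w₀) (t • δ)
    have hopt : F w₀ + conePenalty (diagonal c) (q + G w₀) ≤ _ := hmin hmem
    simp only [quadForm, mulVec_smul, dotProduct_smul, smul_dotProduct, smul_eq_mul] at hexpand ⊢
    rw [hslope, ← mul_nonneg_iff_of_pos_left ht]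
    linarith
  have hslope_nonneg : 0 ≤ slope := nonneg_of_forall_add_mul_nonneg hdescent
  rw [hslope, hδ, dotProduct_sub] at hslope_nonneg
  change F w₀ + _ ≤ F w + _
  linarith

end FirstOrder

section Averages

variable {E : Type*} [AddCommGroup E] [Module ℝ E] {N m p : ℕ}

/-- The running average `x̄ᵏ = (x¹ + ⋯ + xᵏ) / k`, which leaves out the initial point `x⁰`. -/
noncomputable def ergodicMean (x : ℕ → E) (k : ℕ) : E :=
  (k : ℝ)⁻¹ • ∑ l ∈ Finset.range k, x (l + 1)

lemma ergodicMean_eq_sum_Icc (x : ℕ → E) (k : ℕ) :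
    ergodicMean x k = (k : ℝ)⁻¹ • ∑ l ∈ Finset.Icc 1 k, x l := by
  rw [ergodicMean, Finset.range_eq_Ico, Finset.sum_Ico_add', zero_add,
    Finset.Ico_add_one_right_eq_Icc]

lemma mul_map_ergodicMean_le {S : Set E} {φ : E → ℝ} (hφ : ConvexOn ℝ S φ) {x : ℕ → E}
    (hx : ∀ l, x (l + 1) ∈ S) {k : ℕ} (hk : 0 < k) :
    k * φ (ergodicMean x k) ≤ ∑ l ∈ Finset.range k, φ (x (l + 1)) := by
  have hk' : (0 : ℝ) < k := Nat.cast_pos.2 hk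
  have hweights : ∑ _l ∈ Finset.range k, (k : ℝ)⁻¹ = 1 := by
    rw [Finset.sum_const, Finset.card_range, nsmul_eq_mul, mul_inv_cancel₀ hk'.ne']
  have h := hφ.map_sum_le (fun _ _ => inv_nonneg.2 hk'.le) hweights fun l _ => hx l
  rwa [← Finset.smul_sum, ← Finset.smul_sum, smul_eq_mul, ← div_eq_inv_mul, le_div_iff₀' hk'] at h

lemma IsConeConvexOn.memKpolar_ergodicMean_sub {S : Set E} {G : E → Idx N m p → ℝ}
    (hG : IsConeConvexOn S G) {x : ℕ → E} (hx : ∀ l, x (l + 1) ∈ S) {k : ℕ} (hk : 0 < k) :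
    memKpolar ((k : ℝ) • G (ergodicMean x k) - ∑ l ∈ Finset.range k, G (x (l + 1))) := by
  have hle := fun ij => mul_map_ergodicMean_le (hG.convexOn ij) hx hk
  have hge := fun i j => mul_map_ergodicMean_le (hG.concaveOn_inr i j).neg hx hk
  simp only [Pi.neg_apply, Finset.sum_neg_distrib, mul_neg, neg_le_neg_iff] at hge
  refine fun i => ⟨fun j => ?_, fun j => ?_⟩ <;>
    simp only [Pi.sub_apply, Pi.smul_apply, smul_eq_mul, Finset.sum_apply]
  · exact sub_nonpos.2 (hle _)
  · exact sub_eq_zero.2 ((hle _).antisymm (hge i j))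

/-- The Euclidean norm of `([u_μ]₊, u_λ)`, the amount by which `u_μ ≤ 0` and `u_λ = 0` fail. -/
noncomputable def violation (u : Blk m p → ℝ) : ℝ :=
  √(∑ j, max (u (Sum.inl j)) 0 ^ 2 + ∑ j, u (Sum.inr j) ^ 2)

lemma violation_le_div {r : ℝ} (hr : 0 < r) {u T : Blk m p → ℝ}
    (hinl : ∀ j, r * u (Sum.inl j) ≤ T (Sum.inl j))
    (hinr : ∀ j, r * u (Sum.inr j) = T (Sum.inr j)) : violation u ≤ √(T ⬝ᵥ T) / r := by
  have hpos (j : Fin m) : r ^ 2 * max (u (Sum.inl j)) 0 ^ 2 ≤ T (Sum.inl j) * T (Sum.inl j) := by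
    rw [← mul_pow, mul_max_of_nonneg _ _ hr.le, mul_zero, ← sq]
    refine sq_le_sq.2 ?_
    rw [abs_of_nonneg (le_max_right _ _)]
    exact max_le ((hinl j).trans (le_abs_self _)) (abs_nonneg _)
  have hsq : (∑ j, max (u (Sum.inl j)) 0 ^ 2 + ∑ j, u (Sum.inr j) ^ 2) * r ^ 2 ≤ T ⬝ᵥ T := by
    rw [mul_comm, mul_add, Finset.mul_sum, Finset.mul_sum, dotProduct, Fintype.sum_sum_type]
    refine add_le_add (Finset.sum_le_sum fun j _ => hpos j) (Finset.sum_le_sum fun j _ => ?_)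
    rw [← hinr, ← sq, mul_pow]
  calc violation u ≤ √(T ⬝ᵥ T / r ^ 2) := Real.sqrt_le_sqrt ((le_div_iff₀ (pow_pos hr 2)).2 hsq)
    _ = √(T ⬝ᵥ T) / r := by rw [Real.sqrt_div' _ (sq_nonneg r), Real.sqrt_sq hr.le]

end Averages

section SaddlePoint

variable {E : Type*} {N m p : ℕ}

/-- The primal-dual pair `(xs, (mu, lam))` satisfies primal feasibility, dual feasibility,
complementary slackness and Lagrangian minimality for the problem of minimizing `F` over `S`
subject to the coupled constraints obtained by summing the blocks of `G` over the agents. -/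
structure IsSaddlePoint (S : Set E) (F : E → ℝ) (G : E → Idx N m p → ℝ) (xs : E)
    (mu : Fin m → ℝ) (lam : Fin p → ℝ) : Prop where
  mem : xs ∈ S
  inl_nonpos : ∀ j, agentSum (G xs) (Sum.inl j) ≤ 0
  inr_eq_zero : ∀ j, agentSum (G xs) (Sum.inr j) = 0
  mu_nonneg : ∀ j, 0 ≤ mu j
  complementary : ∑ j, mu j * agentSum (G xs) (Sum.inl j) = 0
  isMinOn : IsMinOn (fun w => F w + ∑ j, mu j * agentSum (G w) (Sum.inl j)
    + ∑ j, lam j * agentSum (G w) (Sum.inr j)) S xs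

lemma consensus_elim_dotProduct (mu : Fin m → ℝ) (lam : Fin p → ℝ) (u : Idx N m p → ℝ) :
    consensus (Sum.elim mu lam) ⬝ᵥ u
      = ∑ j, mu j * agentSum u (Sum.inl j) + ∑ j, lam j * agentSum u (Sum.inr j) := by
  rw [consensus_dotProduct, dotProduct, Fintype.sum_sum_type]
  rfl

namespace IsSaddlePoint

variable {S : Set E} {F : E → ℝ} {G : E → Idx N m p → ℝ} {xs : E} {mu : Fin m → ℝ}
  {lam : Fin p → ℝ}

lemma memK_consensus (h : IsSaddlePoint S F G xs mu lam) :
    memK (consensus (Sum.elim mu lam) : Idx N m p → ℝ) :=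
  fun _ j => h.mu_nonneg j

lemma consensus_dotProduct_eq_zero (h : IsSaddlePoint S F G xs mu lam) :
    consensus (Sum.elim mu lam) ⬝ᵥ G xs = 0 := by
  simp only [consensus_elim_dotProduct, h.complementary, h.inr_eq_zero, mul_zero,
    Finset.sum_const_zero, add_zero]

lemma isMinOn_add_dotProduct (h : IsSaddlePoint S F G xs mu lam) :
    IsMinOn (fun w => F w + consensus (Sum.elim mu lam) ⬝ᵥ G w) S xs := by
  simpa only [consensus_elim_dotProduct, ← add_assoc] using h.isMinOn

lemma memKpolar_of_agentSum_eq (h : IsSaddlePoint S F G xs mu lam) {r : Idx N m p → ℝ}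
    (hr : r ∈ Set.range consensus) (hsum : agentSum r = agentSum (G xs)) : memKpolar r := by
  obtain ⟨b, rfl⟩ := hr
  rw [agentSum_consensus, Fintype.card_fin] at hsum
  intro i
  have hN : (0 : ℝ) < N := Nat.cast_pos.2 i.pos
  refine ⟨fun j => ?_, fun j => ?_⟩
  · have hb : N * b (Sum.inl j) ≤ 0 := (congrFun hsum _).trans_le (h.inl_nonpos j)
    exact nonpos_of_mul_nonpos_right hb hN
  · have hb : N * b (Sum.inr j) = 0 := (congrFun hsum _).trans (h.inr_eq_zero j)
    exact (mul_eq_zero.1 hb).resolve_left hN.ne'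

end IsSaddlePoint

end SaddlePoint

section Algorithm

/-- The conditions on the stacked weight matrices `A`, `H` and `M = H̃^{1/2}` of DUCA. -/
structure IsDUCAWeights {ι κ : Type*} [Fintype ι] [Fintype κ] (ρ : ℝ)
    (A H M : Matrix (ι × κ) (ι × κ) ℝ) : Prop where
  posSemidef : A.PosSemidef
  isHermitian_sqrt : M.IsHermitian
  posSemidef_sub : (H - M * M).PosSemidef
  isDiag_add : (A + ρ • H).IsDiag
  posDef_add : (A + ρ • H).PosDef
  mulVec_consensus : ∀ b, H *ᵥ consensus b = 0
  sqrt_mulVec_eq_zero_iff : ∀ u, M *ᵥ u = 0 ↔ u ∈ Set.range consensus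

namespace IsDUCAWeights

variable {ι κ : Type*} [Fintype ι] [Fintype κ] {ρ : ℝ} {A H M : Matrix (ι × κ) (ι × κ) ℝ}

lemma sqrt_mulVec_consensus (hW : IsDUCAWeights ρ A H M) (b : κ → ℝ) : M *ᵥ consensus b = 0 :=
  (hW.sqrt_mulVec_eq_zero_iff _).2 ⟨b, rfl⟩

lemma agentSum_sqrt_mulVec (hW : IsDUCAWeights ρ A H M) (u : ι × κ → ℝ) :
    agentSum (M *ᵥ u) = 0 :=
  agentSum_mulVec_eq_zero hW.isHermitian_sqrt hW.sqrt_mulVec_consensus u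

lemma agentSum_mulVec (hW : IsDUCAWeights ρ A H M) (u : ι × κ → ℝ) : agentSum (H *ᵥ u) = 0 := by
  have hMM : (M * M).IsHermitian := by
    simpa only [hW.isHermitian_sqrt.eq] using isHermitian_mul_conjTranspose_self M
  refine agentSum_mulVec_eq_zero ?_ hW.mulVec_consensus u
  simpa only [sub_add_cancel] using hW.posSemidef_sub.1.add hMM

end IsDUCAWeights

variable {E : Type*} {N m p : ℕ}

lemma IsSaddlePoint.memKpolar_sub_mulVec {S : Set E} {F : E → ℝ} {G : E → Idx N m p → ℝ}
    {ρ : ℝ} {A H M : Matrix (Idx N m p) (Idx N m p) ℝ} {xs : E} {mu : Fin m → ℝ}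
    {lam : Fin p → ℝ} {zs : Idx N m p → ℝ} (hs : IsSaddlePoint S F G xs mu lam)
    (hW : IsDUCAWeights ρ A H M) (hzs : M *ᵥ (G xs - M *ᵥ zs) = 0) :
    memKpolar (G xs - M *ᵥ zs) := by
  refine hs.memKpolar_of_agentSum_eq ((hW.sqrt_mulVec_eq_zero_iff _).1 hzs) ?_
  rw [map_sub, hW.agentSum_sqrt_mulVec, sub_zero]

/-- The sequences `x` (from index `1` on), `y` and `z` are generated by DUCA with the stacked
matrices `A`, `H` and `M = H̃^{1/2}`, so that `D = A + ρ H`. -/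
structure IsDUCA (S : Set E) (F : E → ℝ) (G : E → Idx N m p → ℝ) (ρ : ℝ)
    (A H M : Matrix (Idx N m p) (Idx N m p) ℝ) (x : ℕ → E) (y z : ℕ → Idx N m p → ℝ) : Prop where
  mem : ∀ k, x (k + 1) ∈ S
  isMinOn : ∀ k, IsMinOn
    (fun w => F w + conePenalty (A + ρ • H)⁻¹ (A *ᵥ y k - M *ᵥ z k + G w)) S (x (k + 1))
  dual_succ : ∀ k,
    y (k + 1) = projK ((A + ρ • H)⁻¹ *ᵥ (A *ᵥ y k - M *ᵥ z k + G (x (k + 1))))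
  aux_succ : ∀ k, z (k + 1) = z k + ρ • (M *ᵥ y (k + 1))

/-- The vector `A yᵏ - H̃^{1/2} zᵏ + g̃(xᵏ⁺¹)` whose two cone projections give `yᵏ⁺¹` and the
residual `σᵏ⁺¹`. -/
def dualArg (A M : Matrix (Idx N m p) (Idx N m p) ℝ) (G : E → Idx N m p → ℝ) (x : ℕ → E)
    (y z : ℕ → Idx N m p → ℝ) (k : ℕ) : Idx N m p → ℝ :=
  A *ᵥ y k - M *ᵥ z k + G (x (k + 1))

/-- The residual `σᵏ⁺¹ = -𝒫_{K°}(A yᵏ - H̃^{1/2} zᵏ + g̃(xᵏ⁺¹))` of the dual update. -/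
def dualResidual (A M : Matrix (Idx N m p) (Idx N m p) ℝ) (G : E → Idx N m p → ℝ) (x : ℕ → E)
    (y z : ℕ → Idx N m p → ℝ) (k : ℕ) : Idx N m p → ℝ :=
  -projKpolar (dualArg A M G x y z k)

namespace IsDUCA

variable {S : Set E} {F : E → ℝ} {G : E → Idx N m p → ℝ} {ρ : ℝ}
  {A H M : Matrix (Idx N m p) (Idx N m p) ℝ} {x : ℕ → E} {y z : ℕ → Idx N m p → ℝ}

lemma memK_succ (h : IsDUCA S F G ρ A H M x y z) (k : ℕ) : memK (y (k + 1)) :=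
  h.dual_succ k ▸ memK_projK _

lemma dual_succ_eq_inv_mulVec (h : IsDUCA S F G ρ A H M x y z)
    (hW : IsDUCAWeights ρ A H M) (k : ℕ) :
    y (k + 1) = (A + ρ • H)⁻¹ *ᵥ projK (dualArg A M G x y z k) := by
  obtain ⟨c, hc, hinv⟩ := exists_inv_eq_diagonal hW.isDiag_add hW.posDef_add
  rw [h.dual_succ, hinv, projK_diagonal_mulVec hc]
  rfl

lemma mulVec_dual_succ (h : IsDUCA S F G ρ A H M x y z) (hW : IsDUCAWeights ρ A H M) (k : ℕ) :
    (A + ρ • H) *ᵥ y (k + 1) = dualArg A M G x y z k + dualResidual A M G x y z k := by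
  rw [h.dual_succ_eq_inv_mulVec hW, mulVec_mulVec,
    mul_nonsing_inv _ ((isUnit_iff_isUnit_det _).1 hW.posDef_add.isUnit), one_mulVec, dualResidual,
    ← sub_eq_add_neg, eq_sub_iff_add_eq, projK_add_projKpolar]

lemma dual_succ_dotProduct_dualResidual (h : IsDUCA S F G ρ A H M x y z)
    (hW : IsDUCAWeights ρ A H M) (k : ℕ) : y (k + 1) ⬝ᵥ dualResidual A M G x y z k = 0 := by
  obtain ⟨c, -, hinv⟩ := exists_inv_eq_diagonal hW.isDiag_add hW.posDef_add
  rw [h.dual_succ_eq_inv_mulVec hW, hinv, dualResidual, dotProduct_neg,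
    diagonal_mulVec_projK_dotProduct_projKpolar, neg_zero]

lemma mulVec_dual_increment_eq (h : IsDUCA S F G ρ A H M x y z)
    (hW : IsDUCAWeights ρ A H M) (k : ℕ) :
    A *ᵥ (y (k + 1) - y k) + ρ • (H *ᵥ y (k + 1)) + M *ᵥ z k
      = G (x (k + 1)) + dualResidual A M G x y z k := by
  have hy := h.mulVec_dual_succ hW k
  rw [add_mulVec, smul_mulVec, dualArg] at hy
  rw [mulVec_sub, sub_add_eq_add_sub, hy]
  abel

lemma agentSum_mulVec_increment (h : IsDUCA S F G ρ A H M x y z)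
    (hW : IsDUCAWeights ρ A H M) (k : ℕ) :
    agentSum (A *ᵥ (y (k + 1) - y k))
      = agentSum (G (x (k + 1)) + dualResidual A M G x y z k) := by
  rw [← h.mulVec_dual_increment_eq hW, map_add, map_add, map_smul, hW.agentSum_mulVec,
    hW.agentSum_sqrt_mulVec, smul_zero, add_zero, add_zero]

lemma agentSum_sum_constraint_add_residual (h : IsDUCA S F G ρ A H M x y z)
    (hW : IsDUCAWeights ρ A H M) (k : ℕ) :
    agentSum (∑ l ∈ Finset.range k, (G (x (l + 1)) + dualResidual A M G x y z l))
      = agentSum (A *ᵥ (y k - y 0)) := by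
  rw [map_sum, ← Finset.sum_range_sub, mulVec_sum, map_sum]
  exact Finset.sum_congr rfl fun l _ => (h.agentSum_mulVec_increment hW l).symm

variable [AddCommGroup E] [Module ℝ E]

lemma isMinOn_lagrangian (h : IsDUCA S F G ρ A H M x y z) (hW : IsDUCAWeights ρ A H M)
    (hF : ConvexOn ℝ S F) (hG : IsConeConvexOn S G) (k : ℕ) :
    IsMinOn (fun w => F w + y (k + 1) ⬝ᵥ G w) S (x (k + 1)) := by
  obtain ⟨c, hc, hinv⟩ := exists_inv_eq_diagonal hW.isDiag_add hW.posDef_add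
  rw [h.dual_succ_eq_inv_mulVec hW, hinv]
  exact isMinOn_add_dotProduct_of_conePenalty hF hG hc (h.mem k) (hinv ▸ h.isMinOn k)

lemma violation_ergodicMean_le (h : IsDUCA S F G ρ A H M x y z) (hW : IsDUCAWeights ρ A H M)
    (hG : IsConeConvexOn S G) {k : ℕ} (hk : 0 < k) :
    violation (agentSum (G (ergodicMean x k)))
      ≤ √(agentSum (A *ᵥ (y k - y 0)) ⬝ᵥ agentSum (A *ᵥ (y k - y 0))) / k := by
  have hpolar : memKpolar ((k : ℝ) • G (ergodicMean x k)
      - ∑ l ∈ Finset.range k, (G (x (l + 1)) + dualResidual A M G x y z l)) := by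
    have hsplit : (k : ℝ) • G (ergodicMean x k)
        - ∑ l ∈ Finset.range k, (G (x (l + 1)) + dualResidual A M G x y z l)
        = ((k : ℝ) • G (ergodicMean x k) - ∑ l ∈ Finset.range k, G (x (l + 1)))
          + ∑ l ∈ Finset.range k, projKpolar (dualArg A M G x y z l) := by
      simp only [dualResidual, Finset.sum_add_distrib, Finset.sum_neg_distrib]
      abel
    rw [hsplit]
    exact (hG.memKpolar_ergodicMean_sub h.mem hk).add
      (memKpolar.sum fun l => memKpolar_projKpolar _)
  have hsum : (k : ℝ) • agentSum (G (ergodicMean x k)) - agentSum (A *ᵥ (y k - y 0))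
      = agentSum ((k : ℝ) • G (ergodicMean x k)
        - ∑ l ∈ Finset.range k, (G (x (l + 1)) + dualResidual A M G x y z l)) := by
    rw [map_sub, map_smul, h.agentSum_sum_constraint_add_residual hW]
  refine violation_le_div (Nat.cast_pos.2 hk) (fun j => ?_) fun j => ?_
  · exact sub_nonpos.1 ((congrFun hsum _).trans_le ((memKpolar_agentSum hpolar).1 j))
  · exact sub_eq_zero.1 ((congrFun hsum _).trans ((memKpolar_agentSum hpolar).2 j))

section Lyapunov

variable {xs : E} {mu : Fin m → ℝ} {lam : Fin p → ℝ} {zs : Idx N m p → ℝ}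

lemma sub_consensus_dotProduct_nonpos (h : IsDUCA S F G ρ A H M x y z) (hW : IsDUCAWeights ρ A H M)
    (hF : ConvexOn ℝ S F) (hG : IsConeConvexOn S G) (hs : IsSaddlePoint S F G xs mu lam)
    (hzs : M *ᵥ (G xs - M *ᵥ zs) = 0) (k : ℕ) :
    (y (k + 1) - consensus (Sum.elim mu lam))
      ⬝ᵥ (G (x (k + 1)) + dualResidual A M G x y z k - M *ᵥ zs) ≤ 0 := by
  set ys : Idx N m p → ℝ := consensus (Sum.elim mu lam)
  have hprimal : F (x (k + 1)) + y (k + 1) ⬝ᵥ G (x (k + 1)) ≤ F xs + y (k + 1) ⬝ᵥ G xs :=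
    h.isMinOn_lagrangian hW hF hG k hs.mem
  have hsaddle : F xs + ys ⬝ᵥ G xs ≤ F (x (k + 1)) + ys ⬝ᵥ G (x (k + 1)) :=
    hs.isMinOn_add_dotProduct (h.mem k)
  have hyσ := h.dual_succ_dotProduct_dualResidual hW k
  have hysσ : ys ⬝ᵥ -dualResidual A M G x y z k ≤ 0 := by
    rw [dualResidual, neg_neg]
    exact dotProduct_nonpos_of_memK hs.memK_consensus (memKpolar_projKpolar _)
  have hyr := dotProduct_nonpos_of_memK (h.memK_succ k) (hs.memKpolar_sub_mulVec hW hzs)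
  have hysG : ys ⬝ᵥ G xs = 0 := hs.consensus_dotProduct_eq_zero
  have hysM : ys ⬝ᵥ (M *ᵥ zs) = 0 := by
    rw [dotProduct_mulVec_of_isHermitian hW.isHermitian_sqrt, hW.sqrt_mulVec_consensus,
      zero_dotProduct]
  simp only [dotProduct_sub, dotProduct_neg] at hyr hysσ
  simp only [sub_dotProduct, dotProduct_add, dotProduct_sub]
  linarith

lemma gForm_succ_le (h : IsDUCA S F G ρ A H M x y z) (hW : IsDUCAWeights ρ A H M) (hρ : 0 < ρ)
    (hF : ConvexOn ℝ S F) (hG : IsConeConvexOn S G) (hs : IsSaddlePoint S F G xs mu lam)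
    (hzs : M *ᵥ (G xs - M *ᵥ zs) = 0) (k : ℕ) :
    gForm A ρ (y (k + 1) - consensus (Sum.elim mu lam)) (z (k + 1) - zs)
      ≤ gForm A ρ (y k - consensus (Sum.elim mu lam)) (z k - zs) := by
  refine gForm_step_le hW.posSemidef hW.isHermitian_sqrt hW.posSemidef_sub hρ ?_ ?_
  · rw [h.aux_succ, mulVec_sub, hW.sqrt_mulVec_consensus, sub_zero]
    abel
  · rw [sub_sub_sub_cancel_right, mulVec_sub H, hW.mulVec_consensus, sub_zero, mulVec_sub M,
      ← add_sub_assoc, h.mulVec_dual_increment_eq hW]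
    exact h.sub_consensus_dotProduct_nonpos hW hF hG hs hzs k

lemma gForm_le (h : IsDUCA S F G ρ A H M x y z) (hW : IsDUCAWeights ρ A H M) (hρ : 0 < ρ)
    (hF : ConvexOn ℝ S F) (hG : IsConeConvexOn S G) (hs : IsSaddlePoint S F G xs mu lam)
    (hzs : M *ᵥ (G xs - M *ᵥ zs) = 0) (k : ℕ) :
    gForm A ρ (y k - consensus (Sum.elim mu lam)) (z k - zs)
      ≤ gForm A ρ (y 0 - consensus (Sum.elim mu lam)) (z 0 - zs) :=
  antitone_nat_of_succ_le
    (f := fun l => gForm A ρ (y l - consensus (Sum.elim mu lam)) (z l - zs))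
    (h.gForm_succ_le hW hρ hF hG hs hzs) k.zero_le

lemma sqrt_quadForm_sub_initial_le (h : IsDUCA S F G ρ A H M x y z) (hW : IsDUCAWeights ρ A H M)
    (hρ : 0 < ρ) (hF : ConvexOn ℝ S F) (hG : IsConeConvexOn S G)
    (hs : IsSaddlePoint S F G xs mu lam) (hzs : M *ᵥ (G xs - M *ᵥ zs) = 0) (k : ℕ) :
    √(quadForm A (y k - y 0)) ≤ √(quadForm A (y 0 - consensus (Sum.elim mu lam)))
      + √(gForm A ρ (y 0 - consensus (Sum.elim mu lam)) (z 0 - zs)) := by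
  have htri := sqrt_quadForm_sub_le hW.posSemidef (y k - consensus (Sum.elim mu lam))
    (y 0 - consensus (Sum.elim mu lam))
  rw [sub_sub_sub_cancel_right, add_comm] at htri
  exact htri.trans <| add_le_add_right (Real.sqrt_le_sqrt <|
    (quadForm_le_gForm hρ _ _).trans (h.gForm_le hW hρ hF hG hs hzs k)) _

end Lyapunov

end IsDUCA

end Algorithm

section Kronecker

lemma sub_kronecker_one {ι κ : Type*} [DecidableEq κ] (P Q : Matrix ι ι ℝ) :
    (P - Q) ⊗ₖ (1 : Matrix κ κ ℝ) = P ⊗ₖ 1 - Q ⊗ₖ 1 := by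
  rw [eq_sub_iff_add_eq, ← add_kronecker, sub_add_cancel]

variable {ι κ : Type*} [Fintype ι] [DecidableEq κ] {PA PH PHt : Matrix ι ι ℝ}

lemma posSemidef_smul_one_sub_kronecker_one [DecidableEq ι] [Finite κ] (hPA : PA.IsHermitian)
    {lam : ℝ} (hlam : ∀ (μ : ℝ) (v : ι → ℝ), v ≠ 0 → PA *ᵥ v = μ • v → μ ≤ lam) :
    (lam • (1 : Matrix (ι × κ) (ι × κ) ℝ) - PA ⊗ₖ (1 : Matrix κ κ ℝ)).PosSemidef := by
  rw [← one_kronecker_one, ← smul_kronecker, ← sub_kronecker_one]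
  exact (posSemidef_smul_one_sub hPA hlam).kronecker PosSemidef.one

lemma isDUCAWeights_kronecker_one [Fintype κ] {ρ : ℝ} {M : Matrix (ι × κ) (ι × κ) ℝ}
    (hPA : PA.PosSemidef) (hdiag : (PA + ρ • PH).IsDiag) (hpd : (PA + ρ • PH).PosDef)
    (hsub : (PH - PHt).PosSemidef)
    (hPHnull : ∀ v : ι → ℝ, PH *ᵥ v = 0 ↔ ∃ t : ℝ, v = fun _ => t)
    (hPHtnull : ∀ v : ι → ℝ, PHt *ᵥ v = 0 ↔ ∃ t : ℝ, v = fun _ => t)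
    (hM : M.IsHermitian) (hMM : M * M = PHt ⊗ₖ (1 : Matrix κ κ ℝ)) :
    IsDUCAWeights ρ (PA ⊗ₖ (1 : Matrix κ κ ℝ)) (PH ⊗ₖ (1 : Matrix κ κ ℝ)) M where
  posSemidef := hPA.kronecker PosSemidef.one
  isHermitian_sqrt := hM
  posSemidef_sub := by
    rw [hMM, ← sub_kronecker_one]
    exact hsub.kronecker PosSemidef.one
  isDiag_add := by
    rw [← smul_kronecker, ← add_kronecker]
    exact hdiag.kronecker isDiag_one
  posDef_add := by
    rw [← smul_kronecker, ← add_kronecker]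
    exact hpd.kronecker PosDef.one
  mulVec_consensus b := (kronecker_one_mulVec_eq_zero_iff hPHnull _).2 ⟨b, rfl⟩
  sqrt_mulVec_eq_zero_iff u := by
    rw [← kronecker_one_mulVec_eq_zero_iff hPHtnull, ← hMM, ← conjTranspose_mul_self_mulVec_eq_zero,
      hM.eq]

lemma IsMPInv.transpose_mulVec_sub {n : Type*} [Fintype n] [DecidableEq n] {M Md : Matrix n n ℝ}
    (h : IsMPInv M Md) (u : n → ℝ) : Mᵀ *ᵥ (u - M *ᵥ (Md *ᵥ u)) = 0 := by
  have hproj : Mᵀ * (M * Md) = Mᵀ := by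
    rw [← h.2.2.1, ← transpose_mul, h.1]
  rw [mulVec_sub, mulVec_mulVec, mulVec_mulVec, Matrix.mul_assoc, hproj, sub_self]

end Kronecker

section Separable

variable {ι : Type*} {E : ι → Type*} [∀ i, AddCommGroup (E i)] [∀ i, Module ℝ (E i)]
  {X : ∀ i, Set (E i)}

lemma convexOn_pi_apply (hX : ∀ i, Convex ℝ (X i)) {i : ι} {φ : E i → ℝ}
    (hφ : ConvexOn ℝ (X i) φ) : ConvexOn ℝ (Set.univ.pi X) fun x => φ (x i) :=
  (hφ.comp_linearMap (LinearMap.proj i)).subset (fun _ hx => hx i trivial)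
    (convex_pi fun i _ => hX i)

lemma convexOn_pi_sum [Fintype ι] {f : ∀ i, E i → ℝ} (hf : ∀ i, ConvexOn ℝ (X i) (f i)) :
    ConvexOn ℝ (Set.univ.pi X) fun x => ∑ i, f i (x i) := by
  refine ⟨convex_pi fun i _ => (hf i).1, fun a ha b hb s t hs ht hst => ?_⟩
  simp only [Finset.smul_sum, ← Finset.sum_add_distrib]
  exact Finset.sum_le_sum fun i _ => (hf i).2 (ha i trivial) (hb i trivial) hs ht hst

lemma isConeConvexOn_pi {N m p : ℕ} {E : Fin N → Type*} [∀ i, AddCommGroup (E i)]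
    [∀ i, Module ℝ (E i)] {X : ∀ i, Set (E i)} {G : (∀ i, E i) → Idx N m p → ℝ}
    (hX : ∀ i, Convex ℝ (X i)) {g : ∀ i, E i → Fin m → ℝ}
    (hg : ∀ i j, ConvexOn ℝ (X i) fun w => g i w j) (h : ∀ i, E i →ᵃ[ℝ] (Fin p → ℝ))
    (hGg : ∀ x i j, G x (i, Sum.inl j) = g i (x i) j)
    (hGh : ∀ x i j, G x (i, Sum.inr j) = h i (x i) j) : IsConeConvexOn (Set.univ.pi X) G := by
  let coord (i : Fin N) (j : Fin p) : E i →ᵃ[ℝ] ℝ :=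
    (LinearMap.proj j : (Fin p → ℝ) →ₗ[ℝ] ℝ).toAffineMap.comp (h i)
  have hconvex (i : Fin N) (φ : E i →ᵃ[ℝ] ℝ) : ConvexOn ℝ (Set.univ.pi X) fun x => φ (x i) :=
    convexOn_pi_apply hX
      (((convexOn_id convex_univ).comp_affineMap φ).subset (Set.subset_univ _) (hX i))
  refine ⟨?_, fun i j => ?_⟩
  · rintro ⟨i, j | j⟩
    · simpa only [hGg] using convexOn_pi_apply hX (hg i j)
    · simp only [hGh]
      exact hconvex i (coord i j)
  · refine neg_convexOn_iff.1 ?_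
    simp only [hGh]
    exact hconvex i (-coord i j)

end Separable

theorem stmt0_general {E : Type*} [AddCommGroup E] [Module ℝ E] {N m p : ℕ} {S : Set E}
    {F : E → ℝ} {G : E → Idx N m p → ℝ} {ρ lam1 : ℝ} {A H M : Matrix (Idx N m p) (Idx N m p) ℝ}
    {x : ℕ → E} {y z : ℕ → Idx N m p → ℝ} {xs : E} {mu : Fin m → ℝ} {lam : Fin p → ℝ}
    {zs : Idx N m p → ℝ} (hF : ConvexOn ℝ S F) (hG : IsConeConvexOn S G) (hρ : 0 < ρ)
    (hW : IsDUCAWeights ρ A H M) (hlam1 : (lam1 • (1 : Matrix _ _ ℝ) - A).PosSemidef)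
    (h : IsDUCA S F G ρ A H M x y z) (hs : IsSaddlePoint S F G xs mu lam)
    (hzs : M *ᵥ (G xs - M *ᵥ zs) = 0) {k : ℕ} (hk : 1 ≤ k) :
    violation (agentSum (G (ergodicMean x k)))
      ≤ √(N * lam1) / k * (√(quadForm A (y 0 - consensus (Sum.elim mu lam)))
        + √(gForm A ρ (y 0 - consensus (Sum.elim mu lam)) (z 0 - zs))) :=
  calc violation (agentSum (G (ergodicMean x k)))
      ≤ √(agentSum (A *ᵥ (y k - y 0)) ⬝ᵥ agentSum (A *ᵥ (y k - y 0))) / k :=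
        h.violation_ergodicMean_le hW hG hk
    _ ≤ √(N * lam1) * √(quadForm A (y k - y 0)) / k := by
        gcongr
        simpa only [Fintype.card_fin] using sqrt_agentSum_mulVec_le hW.posSemidef hlam1 (y k - y 0)
    _ = √(N * lam1) / k * √(quadForm A (y k - y 0)) := by ring
    _ ≤ _ := by
        gcongr
        exact h.sqrt_quadForm_sub_initial_le hW hρ hF hG hs hzs k

theorem stmt0
    (N m p : ℕ) (hN : 1 ≤ N) (hm : 1 ≤ m) (hp : 1 ≤ p)
    (d : Fin N → ℕ)
    (X : ∀ i : Fin N, Set (Fin (d i) → ℝ))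
    (hXne : ∀ i, (X i).Nonempty) (hXcl : ∀ i, IsClosed (X i))
    (hXcv : ∀ i, Convex ℝ (X i))
    (f : ∀ i : Fin N, (Fin (d i) → ℝ) → ℝ)
    (hf : ∀ i, ConvexOn ℝ Set.univ (f i))
    (g : ∀ i : Fin N, (Fin (d i) → ℝ) → Fin m → ℝ)
    (hg : ∀ i j, ConvexOn ℝ Set.univ (fun xi => g i xi j))
    (B : ∀ i : Fin N, Matrix (Fin p) (Fin (d i)) ℝ) (c : ∀ i : Fin N, Fin p → ℝ)
    (F : (∀ i, Fin (d i) → ℝ) → ℝ) (hF : ∀ x, F x = ∑ i, f i (x i))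
    (tg : (∀ i, Fin (d i) → ℝ) → Idx N m p → ℝ)
    (htg1 : ∀ x (i : Fin N) (j : Fin m), tg x (i, Sum.inl j) = g i (x i) j)
    (htg2 : ∀ x (i : Fin N) (j : Fin p), tg x (i, Sum.inr j) = (B i *ᵥ x i + c i) j)
    (ρ : ℝ) (hρ : 0 < ρ)
    (PA PH PHt : Matrix (Fin N) (Fin N) ℝ)
    (hPA : PA.PosSemidef) (hPH : PH.PosSemidef) (hPHt : PHt.PosSemidef)
    (hDdiag : (PA + ρ • PH).IsDiag) (hDpd : (PA + ρ • PH).PosDef)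
    (hHHt : (PH - PHt).PosSemidef)
    (hPHnull : ∀ v : Fin N → ℝ, PH *ᵥ v = 0 ↔ ∃ t : ℝ, v = fun _ => t)
    (hPHtnull : ∀ v : Fin N → ℝ, PHt *ᵥ v = 0 ↔ ∃ t : ℝ, v = fun _ => t)
    (A Htld D : Matrix (Idx N m p) (Idx N m p) ℝ)
    (hA : A = PA ⊗ₖ (1 : Matrix (Blk m p) (Blk m p) ℝ))
    (hHtld : Htld = PHt ⊗ₖ (1 : Matrix (Blk m p) (Blk m p) ℝ))
    (hD : D = A + ρ • (PH ⊗ₖ (1 : Matrix (Blk m p) (Blk m p) ℝ)))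
    (Hhalf : Matrix (Idx N m p) (Idx N m p) ℝ)
    (hHhalfpsd : Hhalf.PosSemidef) (hHhalfsq : Hhalf * Hhalf = Htld)
    (hXcp : ∀ i, IsCompact (X i))
    (Hhalfdag : Matrix (Idx N m p) (Idx N m p) ℝ) (hHhalfdag : IsMPInv Hhalf Hhalfdag)
    (lam1 : ℝ)
    (hlam1ev : ∃ v : Fin N → ℝ, v ≠ 0 ∧ PA *ᵥ v = lam1 • v)
    (hlam1max : ∀ (μ : ℝ) (v : Fin N → ℝ), v ≠ 0 → PA *ᵥ v = μ • v → μ ≤ lam1)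
    (x : ℕ → ∀ i, Fin (d i) → ℝ) (y z : ℕ → Idx N m p → ℝ)
    (hxX : ∀ k, ∀ i, x (k + 1) i ∈ X i)
    (hy0 : memK (y 0))
    (hyupd : ∀ k, y (k + 1) = projK (D⁻¹ *ᵥ ((A *ᵥ y k) - (Hhalf *ᵥ z k) + tg (x (k + 1)))))
    (hzupd : ∀ k, z (k + 1) = z k + ρ • (Hhalf *ᵥ y (k + 1)))
    (hxmin : ∀ k, ∀ w, (∀ i, w i ∈ X i) →
      F (x (k + 1))
          + (1 / 2) * quadForm D⁻¹ (projK ((A *ᵥ y k) - (Hhalf *ᵥ z k) + tg (x (k + 1))))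
        ≤ F w + (1 / 2) * quadForm D⁻¹ (projK ((A *ᵥ y k) - (Hhalf *ᵥ z k) + tg w)))
    (xs : ∀ i, Fin (d i) → ℝ) (hxsX : ∀ i, xs i ∈ X i)
    (hxsg : ∀ j, (∑ i, g i (xs i) j) ≤ 0)
    (hxsh : ∀ j, (∑ i, (B i *ᵥ xs i + c i) j) = 0)
    (mus : Fin m → ℝ) (hmus : ∀ j, 0 ≤ mus j) (lams : Fin p → ℝ)
    (hcs : (∑ j, mus j * ∑ i, g i (xs i) j) = 0)
    (hsaddle : ∀ w, (∀ i, w i ∈ X i) →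
      F xs + (∑ j, mus j * ∑ i, g i (xs i) j) + (∑ j, lams j * ∑ i, (B i *ᵥ xs i + c i) j)
        ≤ F w + (∑ j, mus j * ∑ i, g i (w i) j) + (∑ j, lams j * ∑ i, (B i *ᵥ w i + c i) j))
    (ys : Idx N m p → ℝ) (hys : ∀ (i : Fin N) (j : Blk m p), ys (i, j) = Sum.elim mus lams j)
    (zstar vstar : Idx N m p → ℝ)
    (hzstar : zstar = Hhalfdag *ᵥ tg xs)
    (hvstar : vstar = Hhalf *ᵥ zstar)
    (xbar : ℕ → ∀ i, Fin (d i) → ℝ)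
    (hxbar : ∀ k (i : Fin N) (j : Fin (d i)),
      xbar k i j = (∑ l ∈ Finset.Icc 1 k, x l i j) / (k : ℝ))
    :
    ∀ k : ℕ, 1 ≤ k →
      Real.sqrt ((∑ j : Fin m, (max (∑ i, g i (xbar k i) j) 0) ^ 2)
          + ∑ j : Fin p, (∑ i, (B i *ᵥ xbar k i + c i) j) ^ 2)
        ≤ Real.sqrt ((N : ℝ) * lam1) / (k : ℝ) *
          (Real.sqrt (quadForm A (y 0 - ys))
            + Real.sqrt (quadForm A (y 0 - ys) + ((z 0 - zstar) ⬝ᵥ (z 0 - zstar)) / ρ)) := by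
  intro k hk
  subst hA hHtld hD hzstar
  have hM := hHhalfpsd.1
  have hFcv : ConvexOn ℝ (Set.univ.pi X) F :=
    funext hF ▸ convexOn_pi_sum fun i => (hf i).subset (Set.subset_univ _) (hXcv i)
  have hG : IsConeConvexOn (Set.univ.pi X) tg :=
    isConeConvexOn_pi hXcv (fun i j => (hg i j).subset (Set.subset_univ _) (hXcv i))
      (fun i => (B i).mulVecLin.toAffineMap + AffineMap.const ℝ _ (c i)) htg1 htg2
  have hsp : IsSaddlePoint (Set.univ.pi X) F tg xs mus lams := by
    refine ⟨fun i _ => hxsX i, ?_, ?_, hmus, ?_, isMinOn_iff.2 fun w hw => ?_⟩ <;>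
      simp only [agentSum_apply, htg1, htg2]
    exacts [hxsg, hxsh, hcs, hsaddle w fun i => hw i trivial]
  have hduca : IsDUCA (Set.univ.pi X) F tg ρ (PA ⊗ₖ 1) (PH ⊗ₖ 1) Hhalf x y z :=
    ⟨fun k i _ => hxX k i, fun k w hw => hxmin k w fun i => hw i trivial, hyupd, hzupd⟩
  have hW := isDUCAWeights_kronecker_one hPA hDdiag hDpd hHHt hPHnull hPHtnull hM hHhalfsq
  have hzs := isHermitian_iff_isSymm.1 hM ▸ hHhalfdag.transpose_mulVec_sub (tg xs)
  have hmean : xbar k = ergodicMean x k := by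
    ext i j
    simp only [hxbar, ergodicMean_eq_sum_Icc, Pi.smul_apply, Finset.sum_apply, smul_eq_mul,
      div_eq_inv_mul]
  obtain rfl : ys = consensus (Sum.elim mus lams) := funext fun ij => hys ij.1 ij.2
  simpa only [violation, agentSum_apply, htg1, htg2, gForm, hmean] using stmt0_general hFcv hG hρ hW
    (posSemidef_smul_one_sub_kronecker_one hPA.1 hlam1max) hduca hsp hzs hk
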